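/- For all integers i, r with 0 ≤ r ≤ i + 2n − 2, one has h_i^{(r)} · Δ_n(x) = Σ_{w ∈ S_n} sgn(w) · x_{w(1)}^r · φ_{i+n−1}(x_{w(1)}) · x_{w(2)}^{n−2} · x_{w(3)}^{n−3} ⋯ x_{w(n)}^0, i.e. the antisymmetrization of h_i^{(r)} · x_1^{n−1} x_2^{n−2} ⋯ x_n^0 equals the antisymmetrization of x_1^r φ_{i+n−1}(x_1) x_2^{n−2} ⋯ x_n^0. -/

import Mathlib

open Polynomial Matrix Finset

noncomputable section

variable {K L : Type*} [Field K] [Field L]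

/-- The orthogonal-polynomial sequence: `φ₀ = 1`, `φ₁ = z - a 0`,
`φ_{i+1} = (z - a i)·φ_i - b i·φ_{i-1}` (so `φ_{-1} = 0`). -/
def phi (a b : ℤ → K) : ℕ → Polynomial K
  | 0 => 1
  | 1 => Polynomial.X - Polynomial.C (a 0)
  | (i+2) => (Polynomial.X - Polynomial.C (a (i+1))) * phi a b (i+1)
      - Polynomial.C (b (i+1)) * phi a b i

/-- `φ` with integer index, `0` for negative index. -/
def phiZ (a b : ℤ → K) (m : ℤ) : Polynomial K :=
  if m < 0 then 0 else phi a b m.toNat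

/-- Generalized Schur polynomial `S_λ(y₁,…,y_m|a,b)
  = det(φ_{λ_j+m-j}(y_i)) / ∏_{i<j}(y_i - y_j)` (indices here 0-based). -/
def genS (a b : ℤ → K) (c : K →+* L) {m : ℕ} (y : Fin m → L) (lam : Fin m → ℕ) : L :=
  Matrix.det (Matrix.of fun i j : Fin m =>
      (phi a b (lam j + (m - 1 - (j : ℕ)))).eval₂ c (y i)) /
    ∏ i : Fin m, ∏ j ∈ Finset.Ioi i, (y i - y j)

/-- `h_i = S_{(i)}` for `i ≥ 0`, and `h_i = 0` for `i < 0`. -/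
def genh (a b : ℤ → K) (c : K →+* L) {m : ℕ} (y : Fin m → L) (i : ℤ) : L :=
  if i < 0 then 0 else genS a b c y (fun j => if (j : ℕ) = 0 then i.toNat else 0)

/-- `h_i^{(0)} = h_i`, `h_i^{(r+1)} = h_{i+1}^{(r)} + a(i+m-1)h_i^{(r)} + b(i+m-1)h_{i-1}^{(r)}`. -/
def genhr (a b : ℤ → K) (c : K →+* L) {m : ℕ} (y : Fin m → L) : ℕ → ℤ → L
  | 0, i => genh a b c y i
  | (r+1), i => genhr a b c y r (i+1) + c (a (i + m - 1)) * genhr a b c y r i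
      + c (b (i + m - 1)) * genhr a b c y r (i-1)

/-- The field `F = K(x₁,…,x_n)`. -/
abbrev Fn (K : Type*) [Field K] (n : ℕ) := FractionRing (MvPolynomial (Fin n) K)

/-- The embedding `K → K(x₁,…,x_n)`. -/
def cK (K : Type*) [Field K] (n : ℕ) : K →+* Fn K n :=
  (algebraMap (MvPolynomial (Fin n) K) (Fn K n)).comp MvPolynomial.C

/-- The variables `x₁,…,x_n` as elements of `K(x₁,…,x_n)`. -/
def xv (K : Type*) [Field K] (n : ℕ) (i : Fin n) : Fn K n :=
  algebraMap (MvPolynomial (Fin n) K) (Fn K n) (MvPolynomial.X i)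

/-! Fix the columns `y^{N-1}, …, y, 1` and let a polynomial `f` vary in the remaining first column:
the resulting determinant is linear in `f` and kills every `f` of degree below `N = n - 1`.
Since the `φ_k` are monic of degree `k`, column operations identify `h_i · Δ` with this functional
at `φ_{i+N}`; for `i < 0` both vanish. The recursion for `h_i^{(r)}` mirrors the three-term
recurrence for `z · φ_m`, so passing from `r` to `r + 1` multiplies the polynomial by `z`.
The recurrence breaks only at `m = -1`, where the error `z^r φ_0 = z^r` is killed as long as
`r < N`; this is what the bound on `r` guarantees. -/

section OrthogonalPolynomials

variable (a b : ℤ → K)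

lemma isMonicOfDegree_phi : ∀ m : ℕ, IsMonicOfDegree (phi a b m) m
  | 0 => isMonicOfDegree_zero_iff.mpr rfl
  | 1 => isMonicOfDegree_X_sub_one (a 0)
  | m + 2 => by
    have hlead : IsMonicOfDegree ((X - C (a (m + 1))) * phi a b (m + 1)) (m + 2) := by
      simpa only [add_comm 1] using
        (isMonicOfDegree_X_sub_one (a (m + 1))).mul (isMonicOfDegree_phi (m + 1))
    have hlow : (C (b (m + 1)) * phi a b m).natDegree < m + 2 := by
      calc (C (b (m + 1)) * phi a b m).natDegree
        _ ≤ (phi a b m).natDegree := natDegree_C_mul_le _ _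
        _ = m := (isMonicOfDegree_phi m).natDegree_eq
        _ < m + 2 := by omega
    exact hlead.sub hlow

lemma phiZ_of_neg {m : ℤ} (hm : m < 0) : phiZ a b m = 0 :=
  if_pos hm

lemma phiZ_natCast (m : ℕ) : phiZ a b m = phi a b m := by
  simp [phiZ]

lemma degree_phiZ_lt {m : ℤ} {N : ℕ} (hm : m < N) : (phiZ a b m).degree < N := by
  rcases lt_or_ge m 0 with hneg | hnonneg
  · simp [phiZ_of_neg a b hneg]
  · lift m to ℕ using hnonneg
    rw [phiZ_natCast, ← natDegree_lt_iff_degree_lt (isMonicOfDegree_phi a b m).ne_zero,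
      (isMonicOfDegree_phi a b m).natDegree_eq]
    exact_mod_cast hm

lemma X_mul_phiZ {m : ℤ} (hm : m ≠ -1) :
    X * phiZ a b m = phiZ a b (m + 1) + C (a m) * phiZ a b m + C (b m) * phiZ a b (m - 1) := by
  rcases lt_or_ge m 0 with hneg | hnonneg
  · simp [phiZ_of_neg a b hneg, phiZ_of_neg a b (by omega : m + 1 < 0),
      phiZ_of_neg a b (by omega : m - 1 < 0)]
  lift m to ℕ using hnonneg
  rw [← Nat.cast_succ, phiZ_natCast, phiZ_natCast]
  cases m with
  | zero => simp [phi, phiZ_of_neg]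
  | succ m =>
    rw [Nat.cast_succ, add_sub_cancel_right, phiZ_natCast, phi]
    ring

end OrthogonalPolynomials

section BorderedVandermonde

variable {R : Type*} [CommRing R] {N : ℕ}

lemma det_eval_rev_eq_det_pow_rev (v : Fin N → R) {p : Fin N → R[X]}
    (hp : ∀ k, IsMonicOfDegree (p k) k) :
    det (of fun i j : Fin N => (p j.rev).eval (v i)) =
      det (of fun i j : Fin N => v i ^ (j.rev : ℕ)) := by
  have h := det_eval_matrixOfPolynomials_eq_det_vandermonde v p
    (fun k => (hp k).natDegree_eq) (fun k => (hp k).monic)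
  have hsign := congrArg (fun d => (Equiv.Perm.sign (Fin.revPerm (n := N)) : R) * d) h.symm
  simp only [← det_permute'] at hsign
  exact hsign

/-- The determinant of the matrix whose rows are `f(y_p), y_p^{N-1}, …, y_p, 1`, as a linear
functional of the polynomial `f`. It is the antisymmetrization of
`f(y_0) y_1^{N-1} y_2^{N-2} ⋯ y_N^0`; see `borderedVandermonde_eq_sum_perm`. -/
def borderedVandermonde (y : Fin (N + 1) → R) : R[X] →ₗ[R] R where
  toFun f := det (of fun p => vecCons (f.eval (y p)) fun k : Fin N => y p ^ (k.rev : ℕ))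
  map_add' f g := by
    simp [det_succ_column_zero, submatrix, mul_add, add_mul, sum_add_distrib]
  map_smul' s f := by
    simp [det_succ_column_zero, submatrix, mul_sum, mul_left_comm, mul_assoc]

variable (y : Fin (N + 1) → R)

lemma borderedVandermonde_apply (f : R[X]) :
    borderedVandermonde y f =
      det (of fun p => vecCons (f.eval (y p)) fun k : Fin N => y p ^ (k.rev : ℕ)) :=
  rfl

lemma borderedVandermonde_eq_sum_perm (f : R[X]) :
    borderedVandermonde y f = ∑ w : Equiv.Perm (Fin (N + 1)), (Equiv.Perm.sign w : ℤ) •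
      (f.eval (y (w 0)) * ∏ k ∈ Ioi (0 : Fin (N + 1)), y (w k) ^ (N + 1 - 1 - (k : ℕ))) := by
  rw [borderedVandermonde_apply, det_apply]
  refine sum_congr rfl fun w _ => ?_
  rw [Fin.prod_univ_succ, Fin.prod_Ioi_zero, Units.smul_def]
  simp [Fin.val_rev]

lemma borderedVandermonde_eq_zero_of_degree_lt {f : R[X]} (hf : f.degree < N) :
    borderedVandermonde y f = 0 := by
  classical
  have hX_pow (k : ℕ) (hk : k < N) : borderedVandermonde y (X ^ k) = 0 :=
    det_zero_of_column_eq (i := 0) (j := (Fin.rev ⟨k, hk⟩).succ) (Fin.succ_ne_zero _).symm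
      fun p => by simp [-Fin.val_rev]
  have hle : degreeLT R N ≤ LinearMap.ker (borderedVandermonde y) := by
    rw [degreeLT_eq_span_X_pow, Submodule.span_le]
    intro g hg
    obtain ⟨k, hk, rfl⟩ := mem_image.mp hg
    exact hX_pow k (mem_range.mp hk)
  exact hle (mem_degreeLT.mpr hf)

lemma borderedVandermonde_eq_det_of_isMonicOfDegree (f : R[X]) {p : Fin N → R[X]}
    (hp : ∀ k, IsMonicOfDegree (p k) k) :
    borderedVandermonde y f =
      det (of fun q => vecCons (f.eval (y q)) fun k : Fin N => (p k.rev).eval (y q)) := by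
  rw [borderedVandermonde_apply, det_succ_column_zero, det_succ_column_zero]
  refine sum_congr rfl fun q _ => ?_
  exact congrArg _ (det_eval_rev_eq_det_pow_rev (fun i => y (q.succAbove i)) hp).symm

lemma borderedVandermonde_X_pow_succ_mul_phiZ (a b : ℤ → K) (c : K →+* R) {r : ℕ} {m : ℤ}
    (hr : m = -1 → r < N) :
    borderedVandermonde y (X ^ (r + 1) * (phiZ a b m).map c) =
      borderedVandermonde y (X ^ r * (phiZ a b (m + 1)).map c) +
        c (a m) * borderedVandermonde y (X ^ r * (phiZ a b m).map c) +
        c (b m) * borderedVandermonde y (X ^ r * (phiZ a b (m - 1)).map c) := by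
  by_cases hm : m = -1
  · have hX_pow : borderedVandermonde y (X ^ r) = 0 :=
      borderedVandermonde_eq_zero_of_degree_lt y <|
        (degree_X_pow_le r).trans_lt (by exact_mod_cast hr hm)
    simp [hm, phiZ, phi, hX_pow]
  · have hrec := congrArg (Polynomial.map c) (X_mul_phiZ a b hm)
    simp only [Polynomial.map_add, Polynomial.map_mul, map_X, map_C] at hrec
    simp only [← smul_eq_mul (c _), ← map_smul, ← map_add, smul_eq_C_mul]
    congr 1
    linear_combination X ^ r * hrec

end BorderedVandermonde

section SingleRow

variable (a b : ℤ → K) (c : K →+* L) {N : ℕ}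

lemma genh_mul_prod_sub {y : Fin (N + 1) → L} (hy : Function.Injective y) (i : ℤ) :
    genh a b c y i * ∏ p, ∏ q ∈ Ioi p, (y p - y q) =
      borderedVandermonde y ((phiZ a b (i + N)).map c) := by
  rcases lt_or_ge i 0 with hneg | hnonneg
  · rw [genh, if_pos hneg, zero_mul, borderedVandermonde_eq_zero_of_degree_lt]
    exact degree_map_le.trans_lt (degree_phiZ_lt a b (by omega))
  · lift i to ℕ using hnonneg
    have hne : ∏ p, ∏ q ∈ Ioi p, (y p - y q) ≠ 0 :=
      prod_ne_zero_iff.mpr fun p _ => prod_ne_zero_iff.mpr fun q hq =>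
        sub_ne_zero.mpr (hy.ne (mem_Ioi.mp hq).ne)
    have hphi (k : Fin N) : IsMonicOfDegree ((phi a b k).map c) k :=
      ⟨(natDegree_map c).trans (isMonicOfDegree_phi a b k).natDegree_eq,
        (isMonicOfDegree_phi a b k).monic.map c⟩
    rw [genh, if_neg (by omega), genS, div_mul_cancel₀ _ hne, ← Nat.cast_add, phiZ_natCast,
      borderedVandermonde_eq_det_of_isMonicOfDegree y _ hphi]
    congr 2
    ext p j
    cases j using Fin.cases <;> simp [Fin.val_rev, eval_map]

lemma genhr_mul_prod_sub {y : Fin (N + 1) → L} (hy : Function.Injective y) {r : ℕ} {i : ℤ}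
    (hr : (r : ℤ) < i + 2 * (N + 1)) :
    genhr a b c y r i * ∏ p, ∏ q ∈ Ioi p, (y p - y q) =
      borderedVandermonde y (X ^ r * (phiZ a b (i + N)).map c) := by
  induction r generalizing i with
  | zero => rw [genhr, genh_mul_prod_sub a b c hy, pow_zero, one_mul]
  | succ r ih =>
    have hindex : i + (N + 1 : ℕ) - 1 = i + N := by omega
    rw [genhr, hindex, add_mul, add_mul, mul_assoc, mul_assoc, ih (by omega), ih (by omega),
      ih (by omega), borderedVandermonde_X_pow_succ_mul_phiZ y a b c (by omega),
      add_right_comm i 1, sub_add_eq_add_sub]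

theorem genhr_antisymmetrization_general {n : ℕ} (hn : 1 ≤ n) {y : Fin n → L}
    (hy : Function.Injective y) (i : ℤ) (r : ℕ) (hr : (r : ℤ) < i + 2 * n) :
    genhr a b c y r i * (∏ p : Fin n, ∏ q ∈ Ioi p, (y p - y q)) =
      ∑ w : Equiv.Perm (Fin n), (Equiv.Perm.sign w : ℤ) •
        (y (w ⟨0, hn⟩) ^ r * (phiZ a b (i + n - 1)).eval₂ c (y (w ⟨0, hn⟩)) *
          ∏ k ∈ Ioi (⟨0, hn⟩ : Fin n), y (w k) ^ (n - 1 - (k : ℕ))) := by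
  obtain ⟨N, rfl⟩ := Nat.exists_eq_add_of_le' hn
  have hindex : i + (N + 1 : ℕ) - 1 = i + N := by omega
  rw [genhr_mul_prod_sub a b c hy (by exact_mod_cast hr), borderedVandermonde_eq_sum_perm, hindex]
  simp only [eval_mul, eval_pow, eval_X, eval_map]
  rfl

end SingleRow

lemma xv_injective (K : Type*) [Field K] (n : ℕ) : Function.Injective (xv K n) :=
  (IsFractionRing.injective (MvPolynomial (Fin n) K) (Fn K n)).comp MvPolynomial.X_injective

/-- For `0 ≤ r ≤ i + 2n - 2`, the antisymmetrization identity
`h_i^{(r)}·Δ_n(x) = Σ_w sgn(w)·x_{w(1)}^r·φ_{i+n-1}(x_{w(1)})·x_{w(2)}^{n-2}⋯x_{w(n)}^0`. -/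
theorem genhr_antisymmetrization (K : Type*) [Field K] (a b : ℤ → K) (n : ℕ) (hn : 1 ≤ n)
    (i : ℤ) (r : ℕ) (hr2 : (r : ℤ) ≤ i + 2 * n - 2) :
    genhr a b (cK K n) (xv K n) r i *
        (∏ p : Fin n, ∏ q ∈ Finset.Ioi p, (xv K n p - xv K n q)) =
      ∑ w : Equiv.Perm (Fin n),
        ((Equiv.Perm.sign w : ℤ)) •
          (xv K n (w ⟨0, by omega⟩) ^ r *
            (phiZ a b (i + n - 1)).eval₂ (cK K n) (xv K n (w ⟨0, by omega⟩)) *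
            ∏ k ∈ Finset.Ioi (⟨0, by omega⟩ : Fin n),
              xv K n (w k) ^ (n - 1 - (k : ℕ))) :=
  genhr_antisymmetrization_general a b (cK K n) hn (xv_injective K n) i r (by omega)
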